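/- arXiv:2401.02067 — 3 statements merged into one kernel-verified Lean document; each statement's English description precedes it below -/
import Mathlib

section
/- Let k be a Brauer field and let d = (d_1, ..., d_r) be a multi-degree. Then there exists a constant C, depending only on d and k, with the following property: for every finite-dimensional k-vector space V with dim V > C and every tuple f = (f_1, ..., f_r) of homogeneous polynomial functions on V of degrees d_1, ..., d_r, there exists a nonzero vector v ∈ V with f_1(v) = ... = f_r(v) = 0. -/
open MvPolynomial

/-- A field `k` is a *Brauer field* if for every `d ≥ 1` there is an `N` such that every
diagonal equation `a_1 x_1^d + ⋯ + a_n x_n^d = 0` with `n > N` has a nontrivial solution. -/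
def IsBrauerField (k : Type*) [Field k] : Prop :=
  ∀ d : ℕ, 1 ≤ d → ∃ N : ℕ, ∀ n : ℕ, N < n → ∀ a : Fin n → k,
    ∃ x : Fin n → k, x ≠ 0 ∧ ∑ i, a i * x i ^ d = 0

/-!
Write a vector as `(u, w)`, with `w` in a new block of variables. The coefficients in `w` of a form
`f(u, w)` of degree at most `e + 1` are forms in `w`; choosing `w ≠ 0` to be a common zero of those
whose degree lies between `1` and `e`, which exists by induction on `e`, leaves
`f(u, y w) = f(u, 0) + c y ^ (e + 1)`. Splitting off blocks in this way produces a subspace of any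
prescribed dimension on which all forms of the system become diagonal of degree `e + 1`. A system of
diagonal equations is solved by the Brauer property, one equation at a time.
-/

/-- Every diagonal equation of degree `m` in sufficiently many variables has a nontrivial zero
in `R`. A Brauer field is a field with this property for all `m ≥ 1`. -/
def HasDiagonalZeros (R : Type*) [CommSemiring R] (m : ℕ) : Prop :=
  ∃ N : ℕ, ∀ n : ℕ, N < n → ∀ a : Fin n → R,
    ∃ x : Fin n → R, x ≠ 0 ∧ ∑ i, a i * x i ^ m = 0

/-- Every system of forms of degrees `d i` in the variables `σ` has a nontrivial common zero. -/
def HasCommonZeros (R σ : Type*) [CommSemiring R] {ι : Type*} (d : ι → ℕ) : Prop :=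
  ∀ f : ι → MvPolynomial σ R, (∀ i, (f i).IsHomogeneous (d i)) →
    ∃ v : σ → R, v ≠ 0 ∧ ∀ i, eval v (f i) = 0

/-- The statement proved by induction on `e`: forms of prescribed degrees between `1` and `e` have
a nontrivial common zero in some finite set of variables, depending only on the degrees. -/
def SolvesFormsUpTo (R : Type*) [CommSemiring R] (e : ℕ) : Prop :=
  ∀ (ι : Type) [Finite ι] (d : ι → ℕ), (∀ i, d i ∈ Set.Icc 1 e) →
    ∃ (σ : Type) (_ : Finite σ), HasCommonZeros R σ d

section Forms

variable {R σ τ : Type*} [CommSemiring R]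

theorem eval_smul_of_isHomogeneous {f : MvPolynomial σ R} {n : ℕ} (hf : f.IsHomogeneous n)
    (c : R) (v : σ → R) : eval (c • v) f = c ^ n * eval v f := by
  rw [eval_eq, eval_eq, Finset.mul_sum]
  refine Finset.sum_congr rfl fun s hs => ?_
  simp_rw [Pi.smul_apply, smul_eq_mul, mul_pow, Finset.prod_mul_distrib,
    Finset.prod_pow_eq_pow_sum, ← hf.degree_eq_sum_deg_support hs]
  exact mul_left_comm ..

theorem eval_zero_of_isHomogeneous {f : MvPolynomial σ R} {n : ℕ} (hf : f.IsHomogeneous n)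
    (hn : n ≠ 0) : eval 0 f = 0 := by
  simpa [hn] using eval_smul_of_isHomogeneous hf 0 0

theorem isHomogeneous_killCompl {φ : σ → τ} (hφ : Function.Injective φ) {f : MvPolynomial τ R}
    {n : ℕ} (hf : f.IsHomogeneous n) : (killCompl hφ f).IsHomogeneous n := by
  rw [← one_mul n]
  refine hf.aeval _ fun t => ?_
  split_ifs
  · exact isHomogeneous_X R _
  · exact isHomogeneous_zero σ R 1

theorem eval_killCompl {φ : σ → τ} (hφ : Function.Injective φ) (v : σ → R)
    (f : MvPolynomial τ R) : eval v (killCompl hφ f) = eval (Function.extend φ v 0) f := by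
  induction f using MvPolynomial.induction_on with
  | C a => simp
  | add p q hp hq => simp [hp, hq]
  | mul_X p t hp =>
    have eval_X : eval v (killCompl hφ (X t)) = Function.extend φ v 0 t := by
      by_cases ht : t ∈ Set.range φ
      · obtain ⟨s, rfl⟩ := ht
        simp [killCompl, hφ.extend_apply]
      · simp only [killCompl, aeval_X, dif_neg ht, map_zero]
        exact (Function.extend_apply' v (0 : τ → R) t ht).symm
    simp [hp, eval_X]

theorem extend_inl_zero (u : σ → R) :
    Function.extend Sum.inl u 0 = Sum.elim u (0 : τ → R) := by
  funext i
  rcases i with s | t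
  · exact Sum.inl_injective.extend_apply u 0 s
  · exact Function.extend_apply' _ _ _ fun ⟨_, h⟩ => Sum.inl_ne_inr h

theorem coeff_coeff_sumAlgEquiv (f : MvPolynomial (σ ⊕ τ) R) (α : σ →₀ ℕ) (β : τ →₀ ℕ) :
    coeff β (coeff α (sumAlgEquiv R σ τ f)) = coeff (α.sumElim β) f := by
  simp [sumAlgEquiv, coeff, AddMonoidAlgebra.curryAlgEquiv, AddMonoidAlgebra.curryRingEquiv,
    AddMonoidAlgebra.curryAddEquiv]

theorem eval_map_sumAlgEquiv (u : σ → R) (w : τ → R) (f : MvPolynomial (σ ⊕ τ) R) :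
    eval u (map (eval w) (sumAlgEquiv R σ τ f)) = eval (Sum.elim u w) f := by
  induction f using MvPolynomial.induction_on with
  | C a => simp
  | add p q hp hq => simp [hp, hq]
  | mul_X p i hp => rcases i with i | i <;> simp [hp]

theorem eval_sumElim_zero_left (w : τ → R) (f : MvPolynomial (σ ⊕ τ) R) :
    eval (Sum.elim 0 w) f = eval w (coeff 0 (sumAlgEquiv R σ τ f)) := by
  rw [← eval_map_sumAlgEquiv, eval_zero, constantCoeff_eq, coeff_map]

-- For `n < α.degree` the coefficient is zero, so the truncated subtraction is harmless.
theorem isHomogeneous_coeff_sumAlgEquiv {f : MvPolynomial (σ ⊕ τ) R} {n : ℕ}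
    (hf : f.IsHomogeneous n) (α : σ →₀ ℕ) :
    (coeff α (sumAlgEquiv R σ τ f)).IsHomogeneous (n - α.degree) := by
  intro β hβ
  rw [coeff_coeff_sumAlgEquiv] at hβ
  have degree_add : α.degree + β.degree = n := by
    by_contra hne
    refine hβ (hf.coeff_eq_zero ?_)
    simpa [Finsupp.degree_apply] using hne
  rw [Pi.one_def, ← Finsupp.degree_eq_weight_one]
  omega

theorem eval_sumElim_smul_of_mixed_eq_zero {f : MvPolynomial (σ ⊕ τ) R} {n : ℕ}
    (hf : f.IsHomogeneous n) (hn : n ≠ 0) {w : τ → R}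
    (hw : ∀ α : σ →₀ ℕ, α ≠ 0 → α.degree < n → eval w (coeff α (sumAlgEquiv R σ τ f)) = 0)
    (u : σ → R) (y : R) :
    eval (Sum.elim u (y • w)) f = eval (Sum.elim u 0) f + eval (Sum.elim 0 w) f * y ^ n := by
  classical
  set F := sumAlgEquiv R σ τ f with hF
  have scale (α : σ →₀ ℕ) (c : R) :
      eval (c • w) (coeff α F) = c ^ (n - α.degree) * eval w (coeff α F) :=
    eval_smul_of_isHomogeneous (isHomogeneous_coeff_sumAlgEquiv hf α) c w
  have scale_zero (α : σ →₀ ℕ) :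
      eval 0 (coeff α F) = 0 ^ (n - α.degree) * eval w (coeff α F) := by
    rw [← scale, zero_smul]
  have expansion : map (eval (y • w)) F
      = map (eval 0) F + C (eval (Sum.elim 0 w) f * y ^ n) := by
    ext α
    rw [coeff_add, coeff_map, coeff_map, coeff_C, scale, scale_zero]
    rcases eq_or_ne α 0 with rfl | hα
    · simp [hn, eval_sumElim_zero_left, hF, mul_comm]
    · rcases lt_or_ge α.degree n with hlt | hge
      · simp [hw α hα hlt, hα.symm]
      · simp [Nat.sub_eq_zero_of_le hge, hα.symm]
  rw [← eval_map_sumAlgEquiv, ← hF, expansion, map_add, eval_C, hF, eval_map_sumAlgEquiv]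

end Forms

section Systems

variable {R : Type*} [CommSemiring R]

theorem sum_mul_mul_pow_prod {ι κ : Type*} [Fintype ι] [Fintype κ] (a : ι × κ → R) (z : ι → R)
    (y : ι → κ → R) (m : ℕ) :
    ∑ p, a p * (z p.1 * y p.1 p.2) ^ m = ∑ i, (∑ l, a (i, l) * y i l ^ m) * z i ^ m := by
  simp_rw [Fintype.sum_prod_type, Finset.sum_mul]
  refine Finset.sum_congr rfl fun i _ => Finset.sum_congr rfl fun l _ => ?_
  ring

-- Solve one of the equations on each of many blocks; the remaining equations, restricted to the
-- span of the block solutions, are again diagonal.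
theorem HasDiagonalZeros.exists_common_zero [NoZeroDivisors R] [Nontrivial R] {m : ℕ}
    (h : HasDiagonalZeros R m) (ι : Type*) [Finite ι] :
    ∃ n : ℕ, ∀ a : ι → Fin n → R,
      ∃ x : Fin n → R, x ≠ 0 ∧ ∀ j, ∑ i, a j i * x i ^ m = 0 := by
  induction ι using Finite.induction_empty_option with
  | of_equiv φ ih =>
    obtain ⟨n, hn⟩ := ih
    refine ⟨n, fun a => ?_⟩
    obtain ⟨x, hx0, hx⟩ := hn (a ∘ φ)
    exact ⟨x, hx0, φ.forall_congr_right.mp hx⟩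
  | h_empty => exact ⟨1, fun _ => ⟨1, one_ne_zero, nofun⟩⟩
  | @h_option ι _ ih =>
    obtain ⟨n, hn⟩ := ih
    obtain ⟨N, hN⟩ := h
    refine ⟨n * (N + 1), fun a => ?_⟩
    let b (j : Option ι) (p : Fin n × Fin (N + 1)) : R := a j (finProdFinEquiv p)
    choose y hy0 hy using fun i => hN (N + 1) N.lt_succ_self fun l => b none (i, l)
    obtain ⟨z, hz0, hz⟩ := hn fun j i => ∑ l, b (some j) (i, l) * y i l ^ m
    let x (p : Fin n × Fin (N + 1)) : R := z p.1 * y p.1 p.2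
    refine ⟨x ∘ finProdFinEquiv.symm, ?_, fun j => ?_⟩
    · obtain ⟨i, hi⟩ := Function.ne_iff.mp hz0
      obtain ⟨l, hl⟩ := Function.ne_iff.mp (hy0 i)
      refine Function.ne_iff.mpr ⟨finProdFinEquiv (i, l), ?_⟩
      simpa [x] using ⟨hi, hl⟩
    · have reindex : ∑ p, a j p * (x ∘ finProdFinEquiv.symm) p ^ m
          = ∑ i, (∑ l, b j (i, l) * y i l ^ m) * z i ^ m := by
        rw [← finProdFinEquiv.sum_comp, ← sum_mul_mul_pow_prod]
        simp [b, x]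
      rw [reindex]
      cases j with
      | none => simp [hy]
      | some j => exact hz j

theorem HasCommonZeros.of_embedding {ι σ τ : Type*} {d : ι → ℕ} (h : HasCommonZeros R σ d)
    (φ : σ ↪ τ) : HasCommonZeros R τ d := by
  intro f hf
  obtain ⟨v, hv0, hv⟩ := h (fun i => killCompl φ.injective (f i))
    fun i => isHomogeneous_killCompl φ.injective (hf i)
  refine ⟨Function.extend φ v 0, fun h0 => hv0 ?_, fun i => ?_⟩
  · rw [← Function.extend_comp φ.injective v 0, h0, Pi.zero_comp]
  · rw [← eval_killCompl φ.injective, hv i]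

theorem SolvesFormsUpTo.exists_separated_vector {e : ℕ} (h : SolvesFormsUpTo R e)
    {ι σ : Type} [Finite ι] [Finite σ] {d : ι → ℕ} (hd : ∀ i, d i ∈ Set.Icc 1 (e + 1)) :
    ∃ (τ : Type) (_ : Finite τ), ∀ f : ι → MvPolynomial (σ ⊕ τ) R,
      (∀ i, (f i).IsHomogeneous (d i)) →
      ∃ w : τ → R, w ≠ 0 ∧ ∀ i, ∃ c : R, ∀ (u : σ → R) (y : R),
        eval (Sum.elim u (y • w)) (f i) = eval (Sum.elim u 0) (f i) + c * y ^ (e + 1) := by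
  let κ := {p : ι × (σ →₀ ℕ) // d p.1 - p.2.degree ∈ Set.Icc 1 e}
  have : Finite κ := by
    refine Set.Finite.subset (Set.finite_univ.prod (Finsupp.finite_of_degree_le (e + 1))) ?_
    rintro ⟨i, α⟩ ⟨(hpos : 1 ≤ d i - α.degree), -⟩
    refine ⟨trivial, show α.degree ≤ e + 1 from ?_⟩
    have := (hd i).2
    omega
  obtain ⟨τ, hτ, hzero⟩ := h κ (fun p => d p.1.1 - p.1.2.degree) fun p => p.2
  refine ⟨τ, hτ, fun f hf => ?_⟩
  obtain ⟨w, hw0, hw⟩ := hzero (fun p => coeff p.1.2 (sumAlgEquiv R σ τ (f p.1.1)))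
    fun p => isHomogeneous_coeff_sumAlgEquiv (hf p.1.1) p.1.2
  refine ⟨w, hw0, fun i => ?_⟩
  obtain ⟨hd1, hde⟩ := hd i
  have separated := eval_sumElim_smul_of_mixed_eq_zero (hf i) (w := w) (by omega)
    fun α hα hlt => hw ⟨(i, α), by
      have : α.degree ≠ 0 := mt (Finsupp.degree_eq_zero_iff α).mp hα
      constructor <;> dsimp only <;> omega⟩
  rcases hde.eq_or_lt with htop | hlow
  · exact ⟨eval (Sum.elim 0 w) (f i), htop ▸ separated⟩
  · have pure_eq_zero : eval (Sum.elim 0 w) (f i) = 0 := by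
      rw [eval_sumElim_zero_left]
      exact hw ⟨(i, 0), by rw [map_zero]; exact ⟨hd1, Nat.lt_succ_iff.mp hlow⟩⟩
    exact ⟨0, fun u y => by rw [separated, pure_eq_zero, zero_mul, zero_mul]⟩

theorem SolvesFormsUpTo.exists_diagonal_restriction [NoZeroDivisors R] {e : ℕ}
    (h : SolvesFormsUpTo R e) {ι : Type} [Finite ι] {d : ι → ℕ}
    (hd : ∀ i, d i ∈ Set.Icc 1 (e + 1)) (n : ℕ) :
    ∃ (σ : Type) (_ : Finite σ), ∀ f : ι → MvPolynomial σ R, (∀ i, (f i).IsHomogeneous (d i)) →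
      ∃ L : (Fin n → R) →ₗ[R] σ → R, (∀ x, x ≠ 0 → L x ≠ 0) ∧
        ∀ i, ∃ c : Fin n → R, ∀ x, eval (L x) (f i) = ∑ l, c l * x l ^ (e + 1) := by
  induction n with
  | zero =>
    refine ⟨Empty, inferInstance, fun f hf => ⟨0, fun x hx => absurd (Subsingleton.elim x 0) hx,
      fun i => ⟨0, fun x => ?_⟩⟩⟩
    simpa using eval_zero_of_isHomogeneous (hf i) (Nat.one_le_iff_ne_zero.mp (hd i).1)
  | succ n ih =>
    obtain ⟨σ, hσ, restrict⟩ := ih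
    obtain ⟨τ, hτ, separate⟩ := h.exists_separated_vector (σ := σ) hd
    refine ⟨σ ⊕ τ, inferInstance, fun f hf => ?_⟩
    obtain ⟨L, hL0, hL⟩ := restrict (fun i => killCompl Sum.inl_injective (f i))
      fun i => isHomogeneous_killCompl Sum.inl_injective (hf i)
    obtain ⟨w, hw0, hw⟩ := separate f hf
    let L' : (Fin (n + 1) → R) →ₗ[R] σ ⊕ τ → R :=
      (LinearEquiv.sumArrowLequivProdArrow σ τ R R).symm.toLinearMap ∘ₗ
        (L ∘ₗ LinearMap.funLeft R R Fin.succ).prod ((LinearMap.proj 0).smulRight w)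
    have L'_apply (x : Fin (n + 1) → R) : L' x = Sum.elim (L (Fin.tail x)) (x 0 • w) := rfl
    refine ⟨L', fun x hx hLx => hx ?_, fun i => ?_⟩
    · rw [L'_apply, ← Sum.elim_zero_zero, Sum.elim_eq_iff] at hLx
      have head_eq_zero : x 0 = 0 := by
        obtain ⟨t, ht⟩ := Function.ne_iff.mp hw0
        exact (mul_eq_zero.mp (congrFun hLx.2 t)).resolve_right ht
      have tail_eq_zero : Fin.tail x = 0 := not_imp_not.mp (hL0 _) hLx.1
      exact funext (Fin.cases head_eq_zero (congrFun tail_eq_zero))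
    · obtain ⟨b, hb⟩ := hw i
      obtain ⟨c, hc⟩ := hL i
      refine ⟨Fin.cons b c, fun x => ?_⟩
      have eval_tail : eval (Sum.elim (L (Fin.tail x)) 0) (f i)
          = ∑ l, c l * x l.succ ^ (e + 1) := by
        rw [← extend_inl_zero, ← eval_killCompl Sum.inl_injective, hc]
        rfl
      rw [L'_apply, hb, eval_tail, Fin.sum_univ_succ, add_comm]
      simp

theorem SolvesFormsUpTo.zero [Nontrivial R] : SolvesFormsUpTo R 0 := by
  intro ι _ d hd
  have : IsEmpty ι := ⟨fun i => Nat.not_succ_le_zero 0 ((hd i).1.trans (hd i).2)⟩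
  exact ⟨Unit, inferInstance, fun _ _ => ⟨1, one_ne_zero, isEmptyElim⟩⟩

variable [NoZeroDivisors R] [Nontrivial R]

theorem SolvesFormsUpTo.succ {e : ℕ} (h : SolvesFormsUpTo R e)
    (hdiag : HasDiagonalZeros R (e + 1)) : SolvesFormsUpTo R (e + 1) := by
  intro ι _ d hd
  obtain ⟨n, solve⟩ := hdiag.exists_common_zero ι
  obtain ⟨σ, hσ, restrict⟩ := h.exists_diagonal_restriction hd n
  refine ⟨σ, hσ, fun f hf => ?_⟩
  obtain ⟨L, hL0, hL⟩ := restrict f hf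
  choose c hc using hL
  obtain ⟨x, hx0, hx⟩ := solve c
  exact ⟨L x, hL0 x hx0, fun i => (hc i x).trans (hx i)⟩

theorem solvesFormsUpTo {e : ℕ} (hR : ∀ m ∈ Set.Icc 1 e, HasDiagonalZeros R m) :
    SolvesFormsUpTo R e := by
  induction e with
  | zero => exact .zero
  | succ e ih =>
    refine (ih fun m hm => hR m ⟨hm.1, hm.2.trans e.le_succ⟩).succ (hR _ ?_)
    exact ⟨Nat.le_add_left 1 e, le_rfl⟩

end Systems

theorem brauer_theorem_general {R : Type*} [CommSemiring R] [NoZeroDivisors R] [Nontrivial R]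
    {e : ℕ} (hR : ∀ m ∈ Set.Icc 1 e, HasDiagonalZeros R m) {ι : Type} [Finite ι] {d : ι → ℕ}
    (hd : ∀ i, d i ∈ Set.Icc 1 e) :
    ∃ C : ℕ, ∀ N : ℕ, C < N → HasCommonZeros R (Fin N) d := by
  obtain ⟨σ, _, hσ⟩ := solvesFormsUpTo hR ι d hd
  have := Fintype.ofFinite σ
  refine ⟨Fintype.card σ, fun N hN => ?_⟩
  obtain ⟨φ⟩ : Nonempty (σ ↪ Fin N) :=
    Function.Embedding.nonempty_of_card_le (by simpa using hN.le)
  exact hσ.of_embedding φ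

/-- **Brauer's theorem.** Over a Brauer field `k`, for every multi-degree
`d = (d_1, …, d_r)` there is a constant `C` such that any tuple of homogeneous polynomials
of degrees `d_1, …, d_r` in more than `C` variables has a common nonzero zero over `k`. -/
theorem brauer_theorem (k : Type*) [Field k] (hk : IsBrauerField k)
    (r : ℕ) (d : Fin r → ℕ) (hanti : Antitone d) (hpos : ∀ i, 1 ≤ d i) :
    ∃ C : ℕ, ∀ N : ℕ, C < N → ∀ f : Fin r → MvPolynomial (Fin N) k,
      (∀ i, (f i).IsHomogeneous (d i)) →
      ∃ v : Fin N → k, v ≠ 0 ∧ ∀ i, eval v (f i) = 0 := by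
  obtain ⟨C, hC⟩ := brauer_theorem_general (d := d) (e := ∑ i, d i) (fun m hm => hk m hm.1)
    fun i => ⟨hpos i, Finset.single_le_sum_of_canonicallyOrdered (Finset.mem_univ i)⟩
  exact ⟨C, hC⟩
end

section
/- Let k be an infinite Brauer field and let d ≥ 1 be an integer that is not a multiple of the characteristic of k. Then there exists a constant C, depending only on d and k, such that for every n ≥ C and every choice of nonzero elements a_1, ..., a_n ∈ k, the equation a_1 x_1^d + ... + a_n x_n^d = 1 has a solution with x_1, ..., x_n ∈ k. -/
/-!
Write `D₀` for the set of `d`-th powers of `k` and `D_{r+1} = D_r - D_r`.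

If degree-`d` diagonal forms in `N` variables are isotropic, then every diagonal form in `N ^ r`
variables with nonzero coefficients takes all values in `b • D_r` for some `b ≠ 0`. Indeed, split
a form in `N ^ (r + 1)` variables into `N` blocks, the `l`-th representing `b l • D_r`. An isotropic
vector of the form with coefficients `b l`, scaled so that some coordinate `l₀` is `1`, expresses
`-b l₀ * t` through the other blocks, which gives `b l₀ * (u - t)` for all `u, t ∈ D_r`.

On the other hand `D_r = k` for some `r`. The union of the `D_r` is the infinite subring `K`
generated by the `d`-th powers. A Vandermonde system solved in `K` up to its determinant
gives `b j, c j ∈ K` such that all terms of `∑ j, c j * (b j + y) ^ d` cancel except a nonzero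
linear one and a constant, so every element of `k` is such a sum; its summands, and hence the sum,
lie in a single `D_r`, because `D_r` is stable under multiplication by `d`-th powers.
-/

open Finset Function
open scoped Matrix Pointwise

section IteratedDiff

variable {G : Type*} [AddGroup G]

/-- The iterated difference sets of `S`: each is the set of differences of elements of the previous
one, starting from `S` itself. They exhaust the additive subgroup generated by `S` when `0 ∈ S`. -/
def iteratedDiff (S : Set G) : ℕ → Set G
  | 0 => S
  | r + 1 => iteratedDiff S r - iteratedDiff S r

variable {S : Set G}

lemma zero_mem_iteratedDiff (hS : 0 ∈ S) : ∀ r, 0 ∈ iteratedDiff S r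
  | 0 => hS
  | r + 1 => ⟨0, zero_mem_iteratedDiff hS r, 0, zero_mem_iteratedDiff hS r, sub_zero 0⟩

lemma iteratedDiff_mono (hS : 0 ∈ S) : Monotone (iteratedDiff S) :=
  monotone_nat_of_le_succ fun r s hs ↦ ⟨s, hs, 0, zero_mem_iteratedDiff hS r, sub_zero s⟩

lemma neg_mem_iteratedDiff_succ (hS : 0 ∈ S) {r : ℕ} {s : G} (hs : s ∈ iteratedDiff S r) :
    -s ∈ iteratedDiff S (r + 1) :=
  ⟨0, zero_mem_iteratedDiff hS r, s, hs, zero_sub s⟩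

lemma add_mem_iteratedDiff (hS : 0 ∈ S) {r : ℕ} {s t : G} (hs : s ∈ iteratedDiff S r)
    (ht : t ∈ iteratedDiff S r) : s + t ∈ iteratedDiff S (r + 2) :=
  ⟨s, iteratedDiff_mono hS r.le_succ hs, -t, neg_mem_iteratedDiff_succ hS ht, sub_neg_eq_add s t⟩

lemma exists_mem_iteratedDiff_of_mem_closure (hS : 0 ∈ S) {s : G}
    (hs : s ∈ AddSubgroup.closure S) : ∃ r, s ∈ iteratedDiff S r := by
  induction hs using AddSubgroup.closure_induction with
  | mem s hs => exact ⟨0, hs⟩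
  | zero => exact ⟨0, hS⟩
  | add s t _ _ hs ht =>
    obtain ⟨p, hp⟩ := hs
    obtain ⟨q, hq⟩ := ht
    exact ⟨max p q + 2, add_mem_iteratedDiff hS (iteratedDiff_mono hS (le_max_left p q) hp)
      (iteratedDiff_mono hS (le_max_right p q) hq)⟩
  | neg s _ hs =>
    obtain ⟨r, hr⟩ := hs
    exact ⟨r + 1, neg_mem_iteratedDiff_succ hS hr⟩

lemma mapsTo_iteratedDiff {H : Type*} [AddGroup H] {T : Set H} (f : G →+ H)
    (hf : Set.MapsTo f S T) : ∀ r, Set.MapsTo f (iteratedDiff S r) (iteratedDiff T r)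
  | 0 => hf
  | r + 1 => by
    rintro _ ⟨u, hu, v, hv, rfl⟩
    exact ⟨f u, mapsTo_iteratedDiff f hf r hu, f v, mapsTo_iteratedDiff f hf r hv,
      (map_sub f u v).symm⟩

lemma sum_mem_iteratedDiff {A ι : Type*} [AddCommGroup A] {S : Set A} (hS : 0 ∈ S) {r : ℕ}
    (t : Finset ι) {f : ι → A} (hf : ∀ i ∈ t, f i ∈ iteratedDiff S r) :
    ∑ i ∈ t, f i ∈ iteratedDiff S (r + 2 * #t) := by
  induction t using Finset.cons_induction with
  | empty => simpa using zero_mem_iteratedDiff hS r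
  | cons i t hi ih =>
    rw [sum_cons, card_cons]
    have hfi := iteratedDiff_mono hS (Nat.le_add_right r (2 * #t)) (hf i (mem_cons_self i t))
    exact add_mem_iteratedDiff hS hfi (ih fun j hj ↦ hf j (mem_cons_of_mem hj))

end IteratedDiff

section Moments

variable {R : Type*} [CommRing R] {m : ℕ}

lemma exists_sum_mul_pow_eq_zero_and_ne_zero [IsDomain R] {b : Fin (m + 1) → R}
    (hb : Injective b) :
    ∃ c : Fin (m + 1) → R, (∀ i < m, ∑ j, c j * b j ^ i = 0) ∧ ∑ j, c j * b j ^ m ≠ 0 := by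
  set V := Matrix.vandermonde b
  set e : Fin (m + 1) → R := Pi.single (Fin.last m) 1
  have moments (i : Fin (m + 1)) : ∑ j, (e ᵥ* V.adjugate) j * b j ^ (i : ℕ) = V.det * e i := by
    have h : e ᵥ* V.adjugate ᵥ* V = V.det • e := by
      rw [Matrix.vecMul_vecMul, Matrix.adjugate_mul, Matrix.vecMul_smul, Matrix.vecMul_one]
    exact congrFun h i
  refine ⟨e ᵥ* V.adjugate, fun i hi ↦ ?_, ?_⟩
  · have hne : (⟨i, hi.trans m.lt_succ_self⟩ : Fin (m + 1)) ≠ Fin.last m := Fin.ne_of_lt hi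
    simpa [e, hne] using moments ⟨i, hi.trans m.lt_succ_self⟩
  · have htop : ∑ j, (e ᵥ* V.adjugate) j * b j ^ m = V.det := by
      simpa [e] using moments (Fin.last m)
    exact htop ▸ Matrix.det_vandermonde_ne_zero_iff.2 hb

lemma sum_add_pow_mul_of_moments_eq_zero {ι : Type*} [Fintype ι] {b c : ι → R}
    (h : ∀ i < m, ∑ j, c j * b j ^ i = 0) (y : R) :
    ∑ j, (b j + y) ^ (m + 1) * c j =
      (∑ j, c j * b j ^ m) * (m + 1) * y + ∑ j, c j * b j ^ (m + 1) := by
  calc ∑ j, (b j + y) ^ (m + 1) * c j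
      = ∑ i ∈ range (m + 2), (∑ j, c j * b j ^ i) * (y ^ (m + 1 - i) * (m + 1).choose i) := by
        simp only [add_pow, sum_mul]
        rw [sum_comm]
        exact sum_congr rfl fun i _ ↦ sum_congr rfl fun j _ ↦ by ring
    _ = (∑ j, c j * b j ^ m) * (y * (m + 1)) + ∑ j, c j * b j ^ (m + 1) := by
        rw [sum_range_succ, sum_range_succ,
          sum_eq_zero fun i hi ↦ by rw [h i (mem_range.1 hi), zero_mul]]
        simp
    _ = (∑ j, c j * b j ^ m) * (m + 1) * y + ∑ j, c j * b j ^ (m + 1) := by ring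

end Moments

section DiffPow

variable {R : Type*} [CommRing R] {d : ℕ}

/-- The set `D_r` obtained from the set of `d`-th powers by forming differences `r` times. -/
def diffPow (R : Type*) [CommRing R] (d r : ℕ) : Set R :=
  iteratedDiff (Set.range fun x : R ↦ x ^ d) r

lemma zero_mem_range_pow (hd : d ≠ 0) : (0 : R) ∈ Set.range fun x : R ↦ x ^ d :=
  ⟨0, zero_pow hd⟩

lemma pow_mul_mem_diffPow (y : R) {r : ℕ} {s : R} (hs : s ∈ diffPow R d r) :
    y ^ d * s ∈ diffPow R d r := by
  refine mapsTo_iteratedDiff (AddMonoidHom.mulLeft (y ^ d)) ?_ r hs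
  rintro _ ⟨x, rfl⟩
  exact ⟨y * x, mul_pow y x d⟩

lemma exists_mem_diffPow_of_mem_closure (hd : d ≠ 0) {s : R}
    (hs : s ∈ Subring.closure (Set.range fun x : R ↦ x ^ d)) : ∃ r, s ∈ diffPow R d r := by
  have hpow : (Submonoid.closure (Set.range fun x : R ↦ x ^ d) : Set R) =
      Set.range fun x : R ↦ x ^ d :=
    congrArg SetLike.coe (Submonoid.closure_eq (MonoidHom.mrange (powMonoidHom d : R →* R)))
  rw [Subring.mem_closure_iff, hpow] at hs
  exact exists_mem_iteratedDiff_of_mem_closure (zero_mem_range_pow hd) hs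

lemma exists_forall_sum_pow_mul_mem_diffPow (hd : d ≠ 0) {ι : Type*} [Fintype ι] (c : ι → R)
    (hc : ∀ j, c j ∈ Subring.closure (Set.range fun x : R ↦ x ^ d)) :
    ∃ r, ∀ y : ι → R, ∑ j, y j ^ d * c j ∈ diffPow R d r := by
  choose r hr using fun j ↦ exists_mem_diffPow_of_mem_closure hd (hc j)
  refine ⟨univ.sup r + 2 * #(univ : Finset ι), fun y ↦ ?_⟩
  refine sum_mem_iteratedDiff (zero_mem_range_pow hd) univ fun j _ ↦ pow_mul_mem_diffPow (y j) ?_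
  exact iteratedDiff_mono (zero_mem_range_pow hd) (le_sup (mem_univ j)) (hr j)

lemma infinite_range_pow [IsDomain R] [Infinite R] (hd : d ≠ 0) :
    (Set.range fun x : R ↦ x ^ d).Infinite := by
  rw [← Set.image_univ]
  refine fun hfin ↦ Set.infinite_univ (hfin.of_finite_fibers _ fun s _ ↦ ?_)
  refine (Polynomial.nthRootsFinset d s).finite_toSet.subset fun x hx ↦ ?_
  simpa [Polynomial.mem_nthRootsFinset (Nat.pos_of_ne_zero hd)] using hx

theorem exists_diffPow_eq_univ {k : Type*} [Field k] [Infinite k] (hd : (d : k) ≠ 0) :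
    ∃ r, diffPow k d r = Set.univ := by
  obtain ⟨m, rfl⟩ : ∃ m, d = m + 1 := Nat.exists_eq_succ_of_ne_zero (by rintro rfl; simp at hd)
  set K := Subring.closure (Set.range fun x : k ↦ x ^ (m + 1))
  have : Infinite K :=
    ((infinite_range_pow m.succ_ne_zero).mono Subring.subset_closure).to_subtype
  let b : Fin (m + 1) → K := fun j ↦ Infinite.natEmbedding K j
  have hb : Injective b := (Infinite.natEmbedding K).injective.comp Fin.val_injective
  obtain ⟨c, hlow, htop⟩ := exists_sum_mul_pow_eq_zero_and_ne_zero hb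
  replace hlow : ∀ i < m, ∑ j, (c j : k) * (b j : k) ^ i = 0 := fun i hi ↦ mod_cast hlow i hi
  replace htop : ∑ j, (c j : k) * (b j : k) ^ m ≠ 0 := mod_cast htop
  obtain ⟨r, hr⟩ := exists_forall_sum_pow_mul_mem_diffPow m.succ_ne_zero
    (fun j ↦ (c j : k)) fun j ↦ (c j).2
  refine ⟨r, Set.eq_univ_of_forall fun z ↦ ?_⟩
  have hslope : (∑ j, (c j : k) * (b j : k) ^ m) * (m + 1) ≠ 0 :=
    mul_ne_zero htop (mod_cast hd)
  obtain ⟨y, hy⟩ : ∃ y, (∑ j, (c j : k) * (b j : k) ^ m) * (m + 1) * y +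
      ∑ j, (c j : k) * (b j : k) ^ (m + 1) = z :=
    ⟨_ / _, by rw [mul_div_cancel₀ _ hslope, sub_add_cancel]⟩
  rw [← hy, ← sum_add_pow_mul_of_moments_eq_zero hlow]
  exact hr fun j ↦ b j + y

end DiffPow

section DiagonalValues

/-- The set of values of the diagonal form `∑ i, a i * x i ^ d`. -/
def diagonalValues {R ι : Type*} [CommSemiring R] [Fintype ι] (d : ℕ) (a : ι → R) : Set R :=
  Set.range fun x : ι → R ↦ ∑ i, a i * x i ^ d

variable {R : Type*} [CommSemiring R] {d : ℕ} {ι κ : Type*} [Fintype ι] [Fintype κ]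

lemma diagonalValues_comp_subset (hd : d ≠ 0) (a : κ → R) {f : ι → κ} (hf : Injective f) :
    diagonalValues d (a ∘ f) ⊆ diagonalValues d a := by
  rintro _ ⟨x, rfl⟩
  refine ⟨extend f x 0, (Fintype.sum_of_injective f hf _ _ (fun i hi ↦ ?_) fun j ↦ ?_).symm⟩
  · rw [extend_apply' _ _ _ hi, Pi.zero_apply, zero_pow hd, mul_zero]
  · rw [hf.extend_apply, comp_apply]

lemma sum_mem_diagonalValues {a : ι × κ → R} {w : ι → R}
    (hw : ∀ l, w l ∈ diagonalValues d fun i ↦ a (l, i)) : ∑ l, w l ∈ diagonalValues d a := by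
  choose x hx using hw
  exact ⟨fun p ↦ x p.1 p.2, by simp only [Fintype.sum_prod_type, hx]⟩

lemma exists_apply_eq_one_of_sum_mul_pow_eq_zero {k : Type*} [Field k] {b x : ι → k} (hx : x ≠ 0)
    (h : ∑ l, b l * x l ^ d = 0) : ∃ z : ι → k, ∃ l₀, z l₀ = 1 ∧ ∑ l, b l * z l ^ d = 0 := by
  obtain ⟨l₀, hl₀⟩ := ne_iff.1 hx
  refine ⟨fun l ↦ x l / x l₀, l₀, div_self hl₀, ?_⟩
  simp only [div_pow, ← mul_div_assoc, ← sum_div, h, zero_div]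

lemma mul_sub_mem_diagonalValues {R : Type*} [CommRing R] {S : Set R}
    (hS : ∀ y : R, ∀ s ∈ S, y ^ d * s ∈ S) {a : ι × κ → R} {b z : ι → R}
    (hb : ∀ l, ∀ s ∈ S, b l * s ∈ diagonalValues d fun i ↦ a (l, i))
    (hz : ∑ l, b l * z l ^ d = 0) {l₀ : ι} (hl₀ : z l₀ = 1) {u t : R} (hu : u ∈ S) (ht : t ∈ S) :
    b l₀ * (u - t) ∈ diagonalValues d a := by
  classical
  set w : ι → R := fun l ↦ z l ^ d * t + if l = l₀ then u - t else 0
  have hw : ∀ l, w l ∈ S := fun l ↦ by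
    by_cases hl : l = l₀
    · simpa [w, hl, hl₀] using hu
    · simpa [w, hl] using hS (z l) t ht
  have hsum : ∑ l, b l * w l = b l₀ * (u - t) := by
    simp [w, mul_add, sum_add_distrib, ← mul_assoc, ← sum_mul, hz]
  exact hsum ▸ sum_mem_diagonalValues fun l ↦ hb l (w l) (hw l)

theorem exists_mul_diffPow_subset_diagonalValues {k : Type*} [Field k] (hd : d ≠ 0) {N : ℕ}
    (hN : ∀ b : Fin N → k, ∃ x : Fin N → k, x ≠ 0 ∧ ∑ l, b l * x l ^ d = 0) (r : ℕ) {n : ℕ}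
    (hn : N ^ r ≤ n) {a : Fin n → k} (ha : ∀ i, a i ≠ 0) :
    ∃ b ≠ 0, ∀ s ∈ diffPow k d r, b * s ∈ diagonalValues d a := by
  induction r generalizing n with
  | zero =>
    let i₀ : Fin n := ⟨0, hn⟩
    refine ⟨a i₀, ha i₀, ?_⟩
    rintro _ ⟨x, rfl⟩
    exact diagonalValues_comp_subset hd a (injective_of_subsingleton fun _ : Unit ↦ i₀)
      ⟨fun _ ↦ x, by simp⟩
  | succ r ih =>
    obtain ⟨e⟩ : Nonempty (Fin N × Fin (N ^ r) ↪ Fin n) :=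
      Embedding.nonempty_of_card_le (by simpa [pow_succ'] using hn)
    choose b hb₀ hb using fun l ↦ ih le_rfl fun i ↦ ha (e (l, i))
    obtain ⟨x, hx, hbx⟩ := hN b
    obtain ⟨z, l₀, hl₀, hbz⟩ := exists_apply_eq_one_of_sum_mul_pow_eq_zero hx hbx
    refine ⟨b l₀, hb₀ l₀, ?_⟩
    rintro _ ⟨u, hu, t, ht, rfl⟩
    exact diagonalValues_comp_subset hd a e.injective <|
      mul_sub_mem_diagonalValues (fun y _ ↦ pow_mul_mem_diffPow y) hb hbz hl₀ hu ht

end DiagonalValues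

theorem diagonal_represents_one_general {k : Type*} [Field k] [Infinite k] {d N : ℕ}
    (hd : (d : k) ≠ 0)
    (hN : ∀ b : Fin N → k, ∃ x : Fin N → k, x ≠ 0 ∧ ∑ l, b l * x l ^ d = 0) :
    ∃ C : ℕ, ∀ n : ℕ, C ≤ n → ∀ a : Fin n → k, (∀ i, a i ≠ 0) →
      ∃ x : Fin n → k, ∑ i, a i * x i ^ d = 1 := by
  have hd₀ : d ≠ 0 := by rintro rfl; simp at hd
  obtain ⟨r, hr⟩ := exists_diffPow_eq_univ hd
  refine ⟨N ^ r, fun n hn a ha ↦ ?_⟩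
  obtain ⟨b, hb₀, hb⟩ := exists_mul_diffPow_subset_diagonalValues hd₀ hN r hn ha
  obtain ⟨x, hx⟩ := hb b⁻¹ (hr ▸ Set.mem_univ b⁻¹)
  exact ⟨x, hx.trans (mul_inv_cancel₀ hb₀)⟩

/-- Over an infinite Brauer field `k`, if `d ≥ 1` is not a multiple of the characteristic
of `k`, then there is a constant `C` such that every diagonal equation
`a_1 x_1^d + ⋯ + a_n x_n^d = 1` with `n ≥ C` and all `a_i` nonzero has a solution in `k`. -/
theorem diagonal_represents_one (k : Type*) [Field k] [Infinite k] (hk : IsBrauerField k)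
    (d : ℕ) (hd : 1 ≤ d) (hchar : ¬ (ringChar k ∣ d)) :
    ∃ C : ℕ, ∀ n : ℕ, C ≤ n → ∀ a : Fin n → k, (∀ i, a i ≠ 0) →
      ∃ x : Fin n → k, ∑ i, a i * x i ^ d = 1 := by
  obtain ⟨N, hN⟩ := hk d hd
  exact diagonal_represents_one_general (mt (ringChar.spec k d).1 hchar)
    (hN (N + 1) N.lt_succ_self)
end

section
/- Let k be a field such that −1 is a sum of finitely many squares in k (i.e., k is non-real) and such that the quotient group k^× / (k^×)^d is finite for every integer d ≥ 1. Then k is a Brauer field. -/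
/-!
If `-1` is a sum of squares in `k`, then it is a sum of `d`-th powers for every `d` (Joly). In
characteristic zero, let `T` be the set of sums of `d`-th powers, and call `a` bounded if
`r ± a ∈ T` for some rational `r`. The second moment of a Bernstein polynomial shows that squares of
bounded elements are nonnegative up to arbitrarily small positive rationals, so a vanishing sum of
squares of bounded elements whose rational span contains `1` forces `-1 ∈ T`. To produce one from
`∑ xᵢ² = 0`, consider the degree `d` monomials in the `xᵢ`: the sum of their squares is
`(∑ xᵢ²) ^ d = 0`, and by polarization they are rational combinations of `d`-th powers of sums
of the `xᵢ`, so that they become bounded once divided by the sum of all these `d`-th powers.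

Hence `s` ones form an isotropic diagonal form of degree `d` for some `s`. Among more than
`s * |kˣ/(kˣ)^d|` nonzero coefficients, `s` lie in the same class and carry a scaled copy of that
form.
-/

open Finset

section Polarization

theorem sum_neg_one_pow_card_mul_sum_compl_pow {R : Type*} [CommRing R] {d : ℕ} (y : Fin d → R) :
    ∑ t : Finset (Fin d), (-1) ^ #t * (∑ i ∈ tᶜ, y i) ^ d = d.factorial * ∏ i, y i := by
  classical
  -- Expanding the powers, only the surjective `g : Fin d → Fin d` survive inclusion–exclusion.
  let missing (j : Fin d) : Finset (Fin d → Fin d) := {g | ∀ i, g i ≠ j}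
  have h_perm : (univ.inf fun j ↦ (missing j)ᶜ) =
      univ.map ⟨fun e : Equiv.Perm (Fin d) ↦ ⇑e, DFunLike.coe_injective⟩ := by
    ext g
    simp only [mem_inf, mem_compl, missing, mem_filter_univ, not_forall, not_not, mem_univ,
      true_imp_iff, mem_map, true_and, Function.Embedding.coeFn_mk]
    refine ⟨fun h ↦ ⟨.ofBijective g (Finite.surjective_iff_bijective.1 h), rfl⟩, ?_⟩
    rintro ⟨e, rfl⟩
    exact e.surjective
  have h_avoid (t : Finset (Fin d)) : t.inf missing = Fintype.piFinset fun _ ↦ tᶜ := by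
    ext g
    simp only [missing, mem_inf, mem_filter_univ, Fintype.mem_piFinset, mem_compl]
    exact ⟨fun h i hi ↦ h _ hi i rfl, fun h j hj i hij ↦ h i (hij ▸ hj)⟩
  have h_incl := inclusion_exclusion_sum_inf_compl univ missing fun g ↦ ∏ i, y (g i)
  simp only [h_perm, h_avoid, ← sum_pow', powerset_univ, sum_map, Function.Embedding.coeFn_mk,
    Equiv.prod_comp, sum_const, card_univ, Fintype.card_perm, Fintype.card_fin, nsmul_eq_mul,
    zsmul_eq_mul, Int.cast_pow, Int.cast_neg, Int.cast_one] at h_incl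
  exact h_incl.symm

variable {R : Type*} [CommRing R] [Algebra ℚ R] {d : ℕ}

theorem prod_mem_span_range_sum_pow (y : Fin d → R) :
    ∏ i, y i ∈ Submodule.span ℚ (Set.range fun t : Finset (Fin d) ↦ (∑ i ∈ t, y i) ^ d) := by
  have h_prod : ∏ i, y i = (d.factorial : ℚ)⁻¹ •
      ∑ t : Finset (Fin d), (-1 : ℚ) ^ #t • (∑ i ∈ tᶜ, y i) ^ d := by
    rw [eq_inv_smul_iff₀ (by exact_mod_cast d.factorial_ne_zero)]
    simpa [Algebra.smul_def] using (sum_neg_one_pow_card_mul_sum_compl_pow y).symm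
  rw [h_prod]
  exact Submodule.smul_mem _ _ <| Submodule.sum_mem _ fun t _ ↦
    Submodule.smul_mem _ _ <| Submodule.subset_span ⟨tᶜ, rfl⟩

theorem sum_pow_mem_span_range_prod {ι κ : Type*} (x : ι → R) (f : κ → ι) (t : Finset κ) :
    (∑ i ∈ t, x (f i)) ^ d ∈ Submodule.span ℚ (Set.range fun g : Fin d → ι ↦ ∏ i, x (g i)) := by
  rw [sum_pow']
  exact Submodule.sum_mem _ fun g _ ↦ Submodule.subset_span ⟨f ∘ g, rfl⟩

end Polarization

theorem sum_sq_mul_bernsteinPolynomial_eval {R : Type*} [CommRing R] (x : R) (N : ℕ) :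
    ∑ ν ∈ range (N + 1), (2 * ν - N : R) ^ 2 * (bernsteinPolynomial R N ν).eval x =
      N * ((N - 1) * (2 * x - 1) ^ 2 + 1) := by
  have h_zero := congrArg (Polynomial.eval x) (bernsteinPolynomial.sum R N)
  have h_one := congrArg (Polynomial.eval x) (bernsteinPolynomial.sum_smul R N)
  have h_var := congrArg (Polynomial.eval x) (bernsteinPolynomial.variance R N)
  simp only [Polynomial.eval_finsetSum, Polynomial.eval_one, nsmul_eq_mul, Polynomial.eval_mul,
    Polynomial.eval_natCast, Polynomial.eval_X, Polynomial.eval_pow, Polynomial.eval_sub]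
    at h_zero h_one h_var
  have h_split (ν : ℕ) : (2 * ν - N : R) ^ 2 * (bernsteinPolynomial R N ν).eval x =
      4 * ((N * x - ν) ^ 2 * (bernsteinPolynomial R N ν).eval x) +
        4 * N * (2 * x - 1) * (ν * (bernsteinPolynomial R N ν).eval x) +
        (N ^ 2 - 4 * N ^ 2 * x ^ 2) * (bernsteinPolynomial R N ν).eval x := by ring
  simp only [h_split, sum_add_distrib, ← mul_sum, h_zero, h_one, h_var]
  ring

section Cone

variable {K : Type*} [Field K] {T : Subsemiring K}

theorem ratCast_mem_of_inv_mem (hT : ∀ a ∈ T, a⁻¹ ∈ T) {q : ℚ} (hq : 0 ≤ q) : (q : K) ∈ T := by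
  lift q to ℚ≥0 using hq
  rw [Rat.cast_nnratCast, NNRat.cast_def, div_eq_mul_inv]
  exact T.mul_mem (natCast_mem T _) (hT _ (natCast_mem T _))

theorem neg_one_mem_of_sum_eq_zero (hT : ∀ a ∈ T, a⁻¹ ∈ T) {ι : Type*} [Fintype ι] {p : ι → K}
    (hp : ∀ i, p i ∈ T) (hsum : ∑ i, p i = 0) (hp0 : p ≠ 0) : -1 ∈ T := by
  classical
  obtain ⟨i, hi⟩ := Function.ne_iff.1 hp0
  have h_neg : -p i = ∑ j ∈ univ.erase i, p j := by
    rw [neg_eq_iff_add_eq_zero, add_sum_erase _ _ (mem_univ i), hsum]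
  have h_mem : -p i ∈ T := h_neg ▸ T.sum_mem fun j _ ↦ hp j
  simpa [neg_mul, mul_inv_cancel₀ hi] using T.mul_mem h_mem (hT _ (hp i))

variable [CharZero K]

theorem neg_one_mem_of_ratCast_mem (hT : ∀ a ∈ T, a⁻¹ ∈ T) {q : ℚ} (hq : q < 0)
    (h : (q : K) ∈ T) : -1 ∈ T := by
  have h_inv : (((-q)⁻¹ : ℚ) : K) ∈ T := ratCast_mem_of_inv_mem hT (by simpa using hq.le)
  have h_mul : (q : K) * ((-q)⁻¹ : ℚ) = -1 := by
    rw [← Rat.cast_mul, inv_neg, mul_neg, mul_inv_cancel₀ hq.ne, Rat.cast_neg, Rat.cast_one]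
  exact h_mul ▸ T.mul_mem h h_inv

/-- The elements of `K` bounded by a rational number in the order with nonnegative cone `T`. Closure
of `T` under inverses makes nonnegative rationals nonnegative, hence the `ℚ`-module structure. -/
def boundedElements (T : Subsemiring K) (hT : ∀ a ∈ T, a⁻¹ ∈ T) : Submodule ℚ K where
  carrier := {a | ∃ r : ℚ, r - a ∈ T ∧ r + a ∈ T}
  zero_mem' := ⟨0, by simp⟩
  add_mem' := by
    rintro a b ⟨r, hr, hr'⟩ ⟨s, hs, hs'⟩
    refine ⟨r + s, ?_, ?_⟩
    · convert T.add_mem hr hs using 1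
      push_cast; ring
    · convert T.add_mem hr' hs' using 1
      push_cast; ring
  smul_mem' := by
    rintro q a ⟨r, hr, hr'⟩
    have hq : ((|q| : ℚ) : K) ∈ T := ratCast_mem_of_inv_mem hT (abs_nonneg q)
    refine ⟨|q| * r, ?_⟩
    rw [Rat.smul_def, Rat.cast_mul]
    rcases abs_choice q with h | h <;> rw [h] at hq ⊢
    · exact ⟨mul_sub (q : K) r a ▸ T.mul_mem hq hr, mul_add (q : K) r a ▸ T.mul_mem hq hr'⟩
    · rw [Rat.cast_neg] at hq ⊢
      refine ⟨?_, ?_⟩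
      · convert T.mul_mem hq hr' using 1; ring
      · convert T.mul_mem hq hr using 1; ring

variable {hT : ∀ a ∈ T, a⁻¹ ∈ T}

theorem mem_boundedElements_of_mem {a : K} (ha : a ∈ T) (ha' : 1 - a ∈ T) :
    a ∈ boundedElements T hT :=
  ⟨1, by simpa using ha', by simpa using T.add_mem T.one_mem ha⟩

theorem exists_pos_of_mem_boundedElements {a : K} (ha : a ∈ boundedElements T hT) :
    ∃ r : ℚ, 0 < r ∧ r - a ∈ T ∧ r + a ∈ T := by
  obtain ⟨r, hr, hr'⟩ := ha
  have h_diff : ((|r| + 1 - r : ℚ) : K) ∈ T :=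
    ratCast_mem_of_inv_mem hT (by linarith [le_abs_self r])
  refine ⟨|r| + 1, by positivity, ?_, ?_⟩
  · convert T.add_mem h_diff hr using 1
    push_cast; ring
  · convert T.add_mem h_diff hr' using 1
    push_cast; ring

theorem natCast_mul_sq_add_mem (hT : ∀ a ∈ T, a⁻¹ ∈ T) {a : K} {r : ℚ} (hr : 0 < r)
    (h_sub : r - a ∈ T) (h_add : r + a ∈ T) (N : ℕ) : N * a ^ 2 + (r ^ 2 : ℚ) ∈ T := by
  have hrK : (r : K) ≠ 0 := Rat.cast_ne_zero.2 hr.ne'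
  have h_inv : (2 * r : K)⁻¹ ∈ T := by
    exact_mod_cast ratCast_mem_of_inv_mem hT (inv_pos.2 (mul_pos two_pos hr)).le
  -- The Bernstein polynomials take values in `T` at this `x`, and `2 * x - 1 = a / r`.
  set x : K := (r + a) * (2 * r : K)⁻¹ with hx_def
  have hx : x ∈ T := T.mul_mem h_add h_inv
  have hx' : 1 - x ∈ T := by
    convert T.mul_mem h_sub h_inv using 1
    rw [hx_def]; field_simp; ring
  have h_term (ν : ℕ) :
      (2 * ν - (N + 1 : ℕ) : K) ^ 2 * (bernsteinPolynomial K (N + 1) ν).eval x ∈ T := by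
    have h_sq : (2 * ν - (N + 1 : ℕ) : K) ^ 2 ∈ T := by
      exact_mod_cast ratCast_mem_of_inv_mem hT (sq_nonneg (2 * ν - (N + 1 : ℕ) : ℚ))
    simp only [bernsteinPolynomial, Polynomial.eval_mul, Polynomial.eval_natCast,
      Polynomial.eval_pow, Polynomial.eval_X, Polynomial.eval_sub, Polynomial.eval_one]
    exact T.mul_mem h_sq (T.mul_mem (T.mul_mem (natCast_mem T _) (pow_mem hx _)) (pow_mem hx' _))
  have h_scale : ((r ^ 2 / (N + 1) : ℚ) : K) ∈ T := ratCast_mem_of_inv_mem hT (by positivity)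
  convert T.mul_mem h_scale (T.sum_mem fun ν (_ : ν ∈ range (N + 1 + 1)) ↦ h_term ν) using 1
  have hN : (N + 1 : K) ≠ 0 := by exact_mod_cast N.succ_ne_zero
  rw [sum_sq_mul_bernsteinPolynomial_eval, hx_def]
  push_cast
  field_simp
  ring

theorem exists_forall_natCast_mul_sum_sq_add_mem {ι : Type*} [Fintype ι] {a : ι → K}
    (ha : ∀ i, a i ∈ boundedElements T hT) :
    ∃ r : ℚ, ∀ N : ℕ, N * ∑ i, a i ^ 2 + r ∈ T := by
  choose r hr h_sub h_add using fun i ↦ exists_pos_of_mem_boundedElements (ha i)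
  refine ⟨∑ i, r i ^ 2, fun N ↦ ?_⟩
  rw [Rat.cast_sum, mul_sum, ← sum_add_distrib]
  exact T.sum_mem fun i _ ↦ natCast_mul_sq_add_mem hT (hr i) (h_sub i) (h_add i) N

theorem neg_one_mem_of_sum_sq_eq_ratCast {ι : Type*} [Fintype ι] {a : ι → K}
    (ha : ∀ i, a i ∈ boundedElements T hT) {q : ℚ} (hq : q < 0) (hsq : ∑ i, a i ^ 2 = q) :
    -1 ∈ T := by
  obtain ⟨r, hr⟩ := exists_forall_natCast_mul_sum_sq_add_mem ha
  obtain ⟨N, hN⟩ := exists_nat_gt (r / -q)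
  rw [div_lt_iff₀ (neg_pos.2 hq)] at hN
  refine neg_one_mem_of_ratCast_mem hT (q := N * q + r) (by linarith) ?_
  exact_mod_cast hsq ▸ hr N

theorem neg_one_mem_of_sum_sq_eq_zero {ι : Type*} [Fintype ι] {b : ι → K}
    (hb : ∀ i, b i ∈ boundedElements T hT) {e : ι → ℚ} (he : ∑ i, e i • b i = 1)
    (hsq : ∑ i, b i ^ 2 = 0) : -1 ∈ T := by
  -- `∑ i, (b i - c * e i) ^ 2 = c ^ 2 * E - 2 * c`, which is negative for small `c > 0`.
  let E : ℚ := ∑ i, e i ^ 2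
  have hE : 0 < E + 1 := add_pos_of_nonneg_of_pos (sum_nonneg fun i _ ↦ sq_nonneg (e i)) one_pos
  let c : ℚ := (E + 1)⁻¹
  have h_neg : c ^ 2 * E - 2 * c < 0 := by
    have hc : 0 < c := inv_pos.2 hE
    have hcE : c * (E + 1) = 1 := inv_mul_cancel₀ hE.ne'
    nlinarith
  have h_one : (1 : K) ∈ boundedElements T hT :=
    mem_boundedElements_of_mem T.one_mem (by simp)
  refine neg_one_mem_of_sum_sq_eq_ratCast (fun i ↦ Submodule.sub_mem _ (hb i)
    (Submodule.smul_mem _ (c * e i) h_one)) h_neg ?_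
  have h_expand (i : ι) : (b i - (c * e i) • (1 : K)) ^ 2 =
      b i ^ 2 - 2 * c * (e i • b i) + ((c ^ 2 * e i ^ 2 : ℚ) : K) := by
    simp only [Rat.smul_def]; push_cast; ring
  simp only [h_expand, sum_add_distrib, sum_sub_distrib, ← mul_sum, ← Rat.cast_sum, he, hsq, c, E]
  push_cast
  ring

theorem div_sum_mem_boundedElements {κ : Type*} [Fintype κ] {p : κ → K} (hp : ∀ j, p j ∈ T)
    (hsum : ∑ j, p j ≠ 0) {v : K} (hv : v ∈ Submodule.span ℚ (Set.range p)) :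
    v / ∑ j, p j ∈ boundedElements T hT := by
  classical
  have h_gen (j : κ) : p j / ∑ j, p j ∈ boundedElements T hT := by
    have h_inv := hT _ (T.sum_mem fun j (_ : j ∈ univ) ↦ hp j)
    refine mem_boundedElements_of_mem (div_eq_mul_inv (p j) _ ▸ T.mul_mem (hp j) h_inv) ?_
    have h_compl : 1 - p j / ∑ j, p j = (∑ i ∈ univ.erase j, p i) * (∑ j, p j)⁻¹ := by
      rw [← add_sum_erase _ p (mem_univ j)] at hsum ⊢
      field_simp
      ring
    exact h_compl ▸ T.mul_mem (T.sum_mem fun i _ ↦ hp i) h_inv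
  obtain ⟨e, rfl⟩ := (Submodule.mem_span_range_iff_exists_fun ℚ).1 hv
  simp only [sum_div, smul_div_assoc]
  exact Submodule.sum_mem _ fun j _ ↦ Submodule.smul_mem _ _ (h_gen j)

end Cone

section PowerSums

/-- The sums of `d`-th powers of elements of `R`. -/
def powerSums (R : Type*) [CommSemiring R] (d : ℕ) : Subsemiring R :=
  (MonoidHom.mrange (powMonoidHom d : R →* R)).subsemiringClosure

theorem pow_mem_powerSums {R : Type*} [CommSemiring R] (a : R) (d : ℕ) : a ^ d ∈ powerSums R d :=
  (Submonoid.subsemiringClosure_mem _).2 (AddSubmonoid.subset_closure ⟨a, rfl⟩)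

theorem exists_sum_pow_eq_of_mem_powerSums {R : Type*} [CommSemiring R] {d : ℕ} {a : R}
    (ha : a ∈ powerSums R d) : ∃ (s : ℕ) (c : Fin s → R), ∑ i, c i ^ d = a := by
  rw [powerSums, Submonoid.subsemiringClosure_mem] at ha
  induction ha using AddSubmonoid.closure_induction with
  | mem _ h =>
    obtain ⟨c, rfl⟩ := h
    exact ⟨1, fun _ ↦ c, by simp⟩
  | zero => exact ⟨0, Fin.elim0, by simp⟩
  | add _ _ _ _ ha hb =>
    obtain ⟨s, c, rfl⟩ := ha
    obtain ⟨t, c', rfl⟩ := hb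
    exact ⟨s + t, Fin.append c c', by simp [Fin.sum_univ_add]⟩

variable {K : Type*} [Field K] {d : ℕ}

theorem inv_mem_powerSums (hd : d ≠ 0) : ∀ a ∈ powerSums K d, a⁻¹ ∈ powerSums K d := by
  intro a ha
  have h_inv : a⁻¹ = a⁻¹ ^ d * a ^ (d - 1) := by
    obtain rfl | ha0 := eq_or_ne a 0
    · simp [hd]
    · obtain ⟨m, rfl⟩ := Nat.exists_eq_succ_of_ne_zero hd
      rw [Nat.succ_sub_one, pow_succ', mul_assoc, ← mul_pow, inv_mul_cancel₀ ha0, one_pow, mul_one]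
  exact h_inv ▸ mul_mem (pow_mem_powerSums _ _) (pow_mem ha _)

theorem neg_one_mem_powerSums_of_charZero [CharZero K] (hd : d ≠ 0) {ι : Type*} [Fintype ι]
    {x : ι → K} (hx : x ≠ 0) (hsq : ∑ i, x i ^ 2 = 0) : -1 ∈ powerSums K d := by
  have hT := inv_mem_powerSums (K := K) hd
  let monomial (f : Fin d → ι) : K := ∏ i, x (f i)
  let p (j : (Fin d → ι) × Finset (Fin d)) : K := (∑ i ∈ j.2, x (j.1 i)) ^ d
  have hp (j) : p j ∈ powerSums K d := pow_mem_powerSums _ _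
  have h_mono_sq : ∑ f, monomial f ^ 2 = 0 := by
    simp only [monomial, ← prod_pow]
    rw [← Fintype.sum_pow (fun i ↦ x i ^ 2), hsq, zero_pow hd]
  have h_mono_mem (f) : monomial f ∈ Submodule.span ℚ (Set.range p) :=
    Submodule.span_mono (Set.range_comp_subset_range (fun t ↦ (f, t)) p)
      (prod_mem_span_range_sum_pow fun i ↦ x (f i))
  obtain hsum | hsum := eq_or_ne (∑ j, p j) 0
  · refine neg_one_mem_of_sum_eq_zero hT hp hsum fun hp0 ↦ ?_
    obtain ⟨i, hi⟩ := Function.ne_iff.1 hx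
    have h_span : Submodule.span ℚ (Set.range p) = ⊥ :=
      Submodule.span_eq_bot.2 <| Set.forall_mem_range.2 (congrFun hp0)
    exact hi <| by simpa [monomial, h_span, hd] using h_mono_mem fun _ ↦ i
  · have hsum_mem : ∑ j, p j ∈ Submodule.span ℚ (Set.range monomial) :=
      Submodule.sum_mem _ fun j _ ↦ sum_pow_mem_span_range_prod x j.1 j.2
    obtain ⟨e, he⟩ := (Submodule.mem_span_range_iff_exists_fun ℚ).1 hsum_mem
    refine neg_one_mem_of_sum_sq_eq_zero (e := e)
      (fun f ↦ div_sum_mem_boundedElements (hT := hT) hp hsum (h_mono_mem f)) ?_ ?_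
    · simp only [← smul_div_assoc, ← sum_div, he, div_self hsum]
    · simp only [div_pow, ← sum_div, h_mono_sq, zero_div]

theorem neg_one_mem_powerSums (hd : d ≠ 0) {ι : Type*} [Fintype ι]
    {x : ι → K} (hx : x ≠ 0) (hsq : ∑ i, x i ^ 2 = 0) : -1 ∈ powerSums K d := by
  obtain ⟨p, hp⟩ := CharP.exists K
  obtain rfl | hp0 := eq_or_ne p 0
  · have := CharP.charP_to_charZero K
    exact neg_one_mem_powerSums_of_charZero hd hx hsq
  · have h_cast : (-1 : K) = (p - 1 : ℕ) := by
      rw [Nat.cast_sub (Nat.one_le_iff_ne_zero.2 hp0), CharP.cast_eq_zero, zero_sub, Nat.cast_one]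
    exact h_cast ▸ natCast_mem _ _

end PowerSums

section Diagonal

variable {R : Type*} [CommSemiring R] {d : ℕ} {ι κ : Type*} [Fintype ι] [Fintype κ]

/-- The diagonal form `∑ i, a i * x i ^ d` has a nontrivial zero. -/
def IsIsotropicDiagonal (d : ℕ) (a : ι → R) : Prop :=
  ∃ x : ι → R, x ≠ 0 ∧ ∑ i, a i * x i ^ d = 0

theorem IsIsotropicDiagonal.of_comp (hd : d ≠ 0) {a : ι → R} {g : κ → ι}
    (hg : Function.Injective g) (h : IsIsotropicDiagonal d (a ∘ g)) : IsIsotropicDiagonal d a := by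
  obtain ⟨y, hy, hsum⟩ := h
  refine ⟨Function.extend g y 0, fun h0 ↦ hy ?_, ?_⟩
  · rw [← Function.extend_comp hg y 0, h0, Pi.zero_comp]
  · rw [← hsum]
    refine (Fintype.sum_of_injective g hg _ _ (fun i hi ↦ ?_) fun j ↦ ?_).symm
    · rw [Function.extend_apply' _ _ _ hi, Pi.zero_apply, zero_pow hd, mul_zero]
    · rw [Function.comp_apply, hg.extend_apply]

theorem isIsotropicDiagonal_of_apply_eq_zero [Nontrivial R] (hd : d ≠ 0) {a : ι → R} {i : ι}
    (hi : a i = 0) : IsIsotropicDiagonal d a :=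
  .of_comp hd (Function.injective_of_subsingleton fun _ : Unit ↦ i) ⟨1, one_ne_zero, by simp [hi]⟩

theorem IsIsotropicDiagonal.mul_pow_mul {a : ι → R} (h : IsIsotropicDiagonal d a) (r : R)
    (b : ι → Rˣ) : IsIsotropicDiagonal d fun i ↦ r * b i ^ d * a i := by
  obtain ⟨x, hx, hsum⟩ := h
  refine ⟨fun i ↦ ↑(b i)⁻¹ * x i, fun h0 ↦ hx ?_, ?_⟩
  · ext i
    simpa using congrFun h0 i
  · have h_term (i : ι) : r * b i ^ d * a i * (↑(b i)⁻¹ * x i) ^ d = r * (a i * x i ^ d) := by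
      calc r * b i ^ d * a i * (↑(b i)⁻¹ * x i) ^ d
          = r * (b i * ↑(b i)⁻¹) ^ d * (a i * x i ^ d) := by ring
        _ = r * (a i * x i ^ d) := by rw [Units.mul_inv, one_pow, mul_one]
    simp only [h_term, ← mul_sum, hsum, mul_zero]

theorem isIsotropicDiagonal_of_mk_eq (h_one : IsIsotropicDiagonal d fun _ : κ ↦ (1 : R))
    {u : κ → Rˣ} {q : Rˣ ⧸ (powMonoidHom d : Rˣ →* Rˣ).range}
    (hu : ∀ j, QuotientGroup.mk (u j) = q) :
    IsIsotropicDiagonal d fun j ↦ (u j : R) := by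
  obtain ⟨r, rfl⟩ := QuotientGroup.mk_surjective q
  choose b hb using fun j ↦ QuotientGroup.eq.1 (hu j).symm
  convert h_one.mul_pow_mul r b with j
  have h_unit : u j = r * b j ^ d := by
    rw [← powMonoidHom_apply, hb, mul_inv_cancel_left]
  simp [h_unit]

theorem exists_isIsotropicDiagonal_one {R : Type*} [CommRing R] [Nontrivial R]
    (h : -1 ∈ powerSums R d) :
    ∃ s : ℕ, IsIsotropicDiagonal d fun _ : Fin s ↦ (1 : R) := by
  obtain ⟨s, c, hc⟩ := exists_sum_pow_eq_of_mem_powerSums h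
  refine ⟨s + 1, Fin.cons 1 c, fun h0 ↦ one_ne_zero (congrFun h0 0), ?_⟩
  simp [Fin.sum_univ_succ, hc]

theorem isIsotropicDiagonal_of_card_mul_lt {k : Type*} [Field k] (hd : d ≠ 0)
    [Finite (kˣ ⧸ (powMonoidHom d : kˣ →* kˣ).range)]
    (h_one : IsIsotropicDiagonal d fun _ : κ ↦ (1 : k)) (a : ι → k)
    (h : Nat.card (kˣ ⧸ (powMonoidHom d : kˣ →* kˣ).range) * Fintype.card κ < Fintype.card ι) :
    IsIsotropicDiagonal d a := by
  classical
  by_cases ha : ∃ i, a i = 0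
  · obtain ⟨i, hi⟩ := ha
    exact isIsotropicDiagonal_of_apply_eq_zero hd hi
  push Not at ha
  have := Fintype.ofFinite (kˣ ⧸ (powMonoidHom d : kˣ →* kˣ).range)
  rw [Nat.card_eq_fintype_card] at h
  let u (i : ι) : kˣ := Units.mk0 (a i) (ha i)
  obtain ⟨q, hq⟩ := Fintype.exists_lt_card_fiber_of_mul_lt_card
    (fun i ↦ (u i : kˣ ⧸ (powMonoidHom d : kˣ →* kˣ).range)) h
  rw [← Fintype.card_subtype] at hq
  obtain ⟨g⟩ := Function.Embedding.nonempty_of_card_le hq.le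
  exact .of_comp hd (Subtype.val_injective.comp g.injective)
    (isIsotropicDiagonal_of_mk_eq h_one (u := fun j ↦ u (g j)) fun j ↦ (g j).2)

end Diagonal

/-- A non-real field (−1 is a finite sum of squares) with `kˣ/(kˣ)^d` finite for all
`d ≥ 1` is a Brauer field. -/
theorem isBrauerField_of_nonreal_of_finite_power_classes (k : Type*) [Field k]
    (hnonreal : ∃ (n : ℕ) (c : Fin n → k), ∑ i, c i ^ 2 = -1)
    (hfin : ∀ d : ℕ, 1 ≤ d → Finite (kˣ ⧸ (powMonoidHom d : kˣ →* kˣ).range)) :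
    IsBrauerField k := by
  intro d hd
  have hd0 : d ≠ 0 := Nat.one_le_iff_ne_zero.1 hd
  have := hfin d hd
  obtain ⟨n, c, hc⟩ := hnonreal
  obtain ⟨s, h_one⟩ := exists_isIsotropicDiagonal_one (neg_one_mem_powerSums hd0
    (x := (Fin.cons 1 c : Fin (n + 1) → k)) (fun h0 ↦ one_ne_zero (congrFun h0 0))
    (by simp [Fin.sum_univ_succ, hc]))
  refine ⟨Nat.card (kˣ ⧸ (powMonoidHom d : kˣ →* kˣ).range) * s, fun m hm a ↦ ?_⟩
  exact isIsotropicDiagonal_of_card_mul_lt hd0 h_one a (by simpa using hm)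
end
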